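/- arXiv:2209.03017 — 2 statements merged into one kernel-verified Lean document; each statement's English description precedes it below -/
import Mathlib

section
/- Fix τ₀ ∈ (0,1) and η > 0, and set τ_{ℓ'} = τ₀·2^{-η ℓ'} for ℓ' ∈ ℕ. For h ∈ (0, τ₀] let L̂ = ⌊log₂((h/τ₀)^{-1})/η⌋, and define the work of the branching estimator by W(h) = h^{-1}·((1−τ₀) + Σ_{ℓ'=1}^{L̂−1} 2^{ℓ'}(τ_{ℓ'−1} − τ_{ℓ'}) + 2^{L̂} τ_{L̂−1}) + 2·Σ_{ℓ'=0}^{L̂−1} 2^{ℓ'}. Then there exists a constant C > 0, depending only on τ₀ and η, such that for all h ∈ (0, τ₀]: if η ≠ 1 then W(h) ≤ C·h^{−max(1, 1/η)}, and if η = 1 then W(h) ≤ C·(1 + log₂(1/h))·h^{−1}. -/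
open Real Finset

/-- The branching times `τ_{ℓ'} = τ₀ · 2^{-η ℓ'}`. -/
noncomputable def brTau (τ₀ η : ℝ) (l : ℕ) : ℝ := τ₀ * (2 : ℝ) ^ (-(η * l))

/-- The index `L̂ = ⌊log₂((h/τ₀)⁻¹)/η⌋`. -/
noncomputable def brLhat (τ₀ η h : ℝ) : ℕ := ⌊Real.logb 2 (h / τ₀)⁻¹ / η⌋₊

/-- The work of the branching estimator with step size `h`. -/
noncomputable def brWork (τ₀ η h : ℝ) : ℝ :=
  h⁻¹ * ((1 - τ₀)
      + (∑ l ∈ Finset.Icc 1 (brLhat τ₀ η h - 1),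
          (2 : ℝ) ^ l * (brTau τ₀ η (l - 1) - brTau τ₀ η l))
      + (2 : ℝ) ^ (brLhat τ₀ η h) * brTau τ₀ η (brLhat τ₀ η h - 1))
    + 2 * ∑ l ∈ Finset.range (brLhat τ₀ η h), (2 : ℝ) ^ l

/-!
Summation by parts collapses the total path length to `1 + τ₀ ∑_{l < L̂} r ^ l` with
`r = 2 ^ (1 - η)`, and `2 ^ L̂ ≤ h ^ (-1/η)` by the choice of `L̂`. For `η > 1` the geometric sum is
bounded; for `η = 1` it equals `L̂ ≤ log₂ (1/h)`; for `η < 1` it is comparable to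
`r ^ L̂ = (2 ^ L̂) ^ (1 - η) ≤ h ^ (1 - 1/η)`.
-/

lemma sum_pow_mul_sub_add_pow_mul_pred {R : Type*} [Ring R] (x : R) (f : ℕ → R) (n : ℕ) :
    ∑ l ∈ Icc 1 (n - 1), x ^ l * (f (l - 1) - f l) + x ^ n * f (n - 1)
      = f 0 + (x - 1) * ∑ l ∈ range n, x ^ l * f l := by
  rcases n with _ | n
  · simp
  induction n with
  | zero => simp [sub_mul]
  | succ n ih =>
    rw [sum_range_succ, mul_add, ← add_assoc, ← ih]
    simp only [Nat.add_sub_cancel, sum_Icc_succ_top (Nat.le_add_left 1 n), pow_succ' x (n + 1)]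
    noncomm_ring

lemma geom_sum_le_inv_sub_one_mul_pow {K : Type*} [Field K] [LinearOrder K]
    [IsStrictOrderedRing K] {r : K} (hr : 1 < r) (n : ℕ) :
    ∑ l ∈ range n, r ^ l ≤ (r - 1)⁻¹ * r ^ n := by
  rw [geom_sum_eq hr.ne', div_eq_inv_mul]
  have hr₀ : 0 ≤ (r - 1)⁻¹ := inv_nonneg.2 (sub_nonneg.2 hr.le)
  exact mul_le_mul_of_nonneg_left (sub_le_self _ zero_le_one) hr₀

lemma two_pow_mul_brTau (τ₀ η : ℝ) (l : ℕ) :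
    2 ^ l * brTau τ₀ η l = τ₀ * ((2 : ℝ) ^ (1 - η)) ^ l := by
  have hexp : (1 - η) * l = l + -(η * l) := by ring
  rw [brTau, mul_left_comm, ← rpow_mul_natCast zero_le_two, hexp, rpow_add two_pos, rpow_natCast]

lemma brWork_eq (τ₀ η h : ℝ) :
    brWork τ₀ η h = h⁻¹ * (1 + τ₀ * ∑ l ∈ range (brLhat τ₀ η h), ((2 : ℝ) ^ (1 - η)) ^ l)
      + 2 * (2 ^ brLhat τ₀ η h - 1) := by
  have hτ : brTau τ₀ η 0 = τ₀ := by simp [brTau]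
  have hcount : ∑ l ∈ range (brLhat τ₀ η h), (2 : ℝ) ^ l = 2 ^ brLhat τ₀ η h - 1 := by
    rw [geom_sum_eq (by norm_num)]
    norm_num
  have hlength := sum_pow_mul_sub_add_pow_mul_pred 2 (brTau τ₀ η) (brLhat τ₀ η h)
  simp only [two_pow_mul_brTau, ← mul_sum, hτ] at hlength
  rw [brWork, add_assoc (1 - τ₀), hlength, hcount]
  ring

section StepSize

variable {τ₀ η h : ℝ}

lemma brLhat_le_logb_inv_div (hτ₀ : τ₀ ≤ 1) (hη : 0 < η) (hh : 0 < h) (hle : h ≤ τ₀) :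
    (brLhat τ₀ η h : ℝ) ≤ logb 2 h⁻¹ / η := by
  have hratio : 1 ≤ (h / τ₀)⁻¹ := by rwa [inv_div, one_le_div hh]
  calc (brLhat τ₀ η h : ℝ) ≤ logb 2 (h / τ₀)⁻¹ / η :=
        Nat.floor_le (div_nonneg (logb_nonneg one_lt_two hratio) hη.le)
    _ ≤ logb 2 h⁻¹ / η := by
        gcongr
        · exact one_lt_two
        · exact le_div_self hh.le (hh.trans_le hle) hτ₀

lemma two_pow_brLhat_le_rpow (hτ₀ : τ₀ ≤ 1) (hη : 0 < η) (hh : 0 < h) (hle : h ≤ τ₀) :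
    (2 : ℝ) ^ brLhat τ₀ η h ≤ h ^ (-η⁻¹) :=
  calc (2 : ℝ) ^ brLhat τ₀ η h = (2 : ℝ) ^ (brLhat τ₀ η h : ℝ) := (rpow_natCast _ _).symm
    _ ≤ (2 : ℝ) ^ (logb 2 h⁻¹ / η) :=
        rpow_le_rpow_of_exponent_le one_le_two (brLhat_le_logb_inv_div hτ₀ hη hh hle)
    _ = h ^ (-η⁻¹) := by
        rw [div_eq_mul_inv, rpow_mul zero_le_two, rpow_logb two_pos (by norm_num) (inv_pos.2 hh),
          inv_rpow hh.le, rpow_neg hh.le]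

lemma inv_mul_two_rpow_pow_brLhat_le_rpow (hτ₀ : τ₀ ≤ 1) (hη : 0 < η) (hη₁ : η ≤ 1) (hh : 0 < h)
    (hle : h ≤ τ₀) : h⁻¹ * ((2 : ℝ) ^ (1 - η)) ^ brLhat τ₀ η h ≤ h ^ (-η⁻¹) :=
  calc h⁻¹ * ((2 : ℝ) ^ (1 - η)) ^ brLhat τ₀ η h
      = h⁻¹ * ((2 : ℝ) ^ brLhat τ₀ η h) ^ (1 - η) := by rw [rpow_pow_comm zero_le_two]
    _ ≤ h⁻¹ * (h ^ (-η⁻¹)) ^ (1 - η) := by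
        have hpow := two_pow_brLhat_le_rpow hτ₀ hη hh hle
        have hη₀ := sub_nonneg.2 hη₁
        exact mul_le_mul_of_nonneg_left (rpow_le_rpow (by positivity) hpow hη₀) (inv_nonneg.2 hh.le)
    _ = h ^ (-η⁻¹) := by
        rw [← rpow_mul hh.le, ← rpow_neg_one, ← rpow_add hh]
        congr 1
        field_simp
        ring

lemma brWork_le (hτ₀ : τ₀ ≤ 1) (hη : 0 < η) (hh : 0 < h) (hle : h ≤ τ₀) :
    brWork τ₀ η h ≤ h⁻¹ * (1 + ∑ l ∈ range (brLhat τ₀ η h), ((2 : ℝ) ^ (1 - η)) ^ l)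
      + 2 * h ^ (-η⁻¹) := by
  rw [brWork_eq]
  gcongr
  · exact mul_le_of_le_one_left (by positivity) hτ₀
  · exact (sub_le_self _ zero_le_one).trans (two_pow_brLhat_le_rpow hτ₀ hη hh hle)

lemma brWork_le_of_lt_one (hτ₀ : τ₀ ≤ 1) (hη : 0 < η) (hη₁ : η < 1) (hh : 0 < h) (hle : h ≤ τ₀) :
    brWork τ₀ η h ≤ (3 + (2 ^ (1 - η) - 1)⁻¹) * h ^ (-η⁻¹) := by
  have hr : 1 < (2 : ℝ) ^ (1 - η) := one_lt_rpow one_lt_two (sub_pos.2 hη₁)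
  have hinv : h⁻¹ ≤ h ^ (-η⁻¹) := by
    rw [← rpow_neg_one h]
    exact rpow_le_rpow_of_exponent_ge hh (hle.trans hτ₀)
      (neg_le_neg ((one_le_inv₀ hη).2 hη₁.le))
  have hlast := inv_mul_two_rpow_pow_brLhat_le_rpow hτ₀ hη hη₁.le hh hle
  set r : ℝ := 2 ^ (1 - η)
  set L := brLhat τ₀ η h
  calc brWork τ₀ η h
      ≤ h⁻¹ * (1 + ∑ l ∈ range L, r ^ l) + 2 * h ^ (-η⁻¹) := brWork_le hτ₀ hη hh hle
    _ ≤ h⁻¹ * (1 + (r - 1)⁻¹ * r ^ L) + 2 * h ^ (-η⁻¹) := by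
        gcongr
        exact geom_sum_le_inv_sub_one_mul_pow hr L
    _ = h⁻¹ + (r - 1)⁻¹ * (h⁻¹ * r ^ L) + 2 * h ^ (-η⁻¹) := by ring
    _ ≤ h ^ (-η⁻¹) + (r - 1)⁻¹ * h ^ (-η⁻¹) + 2 * h ^ (-η⁻¹) := by gcongr
    _ = (3 + (r - 1)⁻¹) * h ^ (-η⁻¹) := by ring

lemma brWork_one_le (hτ₀ : τ₀ ≤ 1) (hh : 0 < h) (hle : h ≤ τ₀) :
    brWork τ₀ 1 h ≤ 3 * (1 + logb 2 h⁻¹) * h⁻¹ := by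
  have hlog : 0 ≤ logb 2 h⁻¹ := logb_nonneg one_lt_two ((one_le_inv₀ hh).2 (hle.trans hτ₀))
  calc brWork τ₀ 1 h ≤ h⁻¹ * (1 + brLhat τ₀ 1 h) + 2 * h⁻¹ := by
        simpa [rpow_neg_one] using brWork_le hτ₀ one_pos hh hle
    _ ≤ h⁻¹ * (1 + logb 2 h⁻¹) + 2 * h⁻¹ := by
        gcongr
        simpa using brLhat_le_logb_inv_div hτ₀ one_pos hh hle
    _ ≤ h⁻¹ * (1 + logb 2 h⁻¹) + 2 * (h⁻¹ * (1 + logb 2 h⁻¹)) := by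
        gcongr
        exact le_mul_of_one_le_right (inv_nonneg.2 hh.le) (le_add_of_nonneg_right hlog)
    _ = 3 * (1 + logb 2 h⁻¹) * h⁻¹ := by ring

lemma brWork_le_of_one_lt (hτ₀ : τ₀ ≤ 1) (hη : 1 < η) (hh : 0 < h) (hle : h ≤ τ₀) :
    brWork τ₀ η h ≤ (3 + (1 - 2 ^ (1 - η))⁻¹) * h⁻¹ := by
  have hr : (2 : ℝ) ^ (1 - η) < 1 := rpow_lt_one_of_one_lt_of_neg one_lt_two (sub_neg.2 hη)
  have hrpow : h ^ (-η⁻¹) ≤ h⁻¹ := by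
    rw [← rpow_neg_one h]
    exact rpow_le_rpow_of_exponent_ge hh (hle.trans hτ₀) (neg_le_neg (inv_le_one_of_one_le₀ hη.le))
  set r : ℝ := 2 ^ (1 - η)
  have hsum (n : ℕ) : ∑ l ∈ range n, r ^ l ≤ (1 - r)⁻¹ := by
    simpa using geom_sum_Ico_le_of_lt_one (m := 0) (n := n) (by positivity : 0 ≤ r) hr
  calc brWork τ₀ η h
      ≤ h⁻¹ * (1 + ∑ l ∈ range (brLhat τ₀ η h), r ^ l) + 2 * h ^ (-η⁻¹) :=
        brWork_le hτ₀ (one_pos.trans hη) hh hle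
    _ ≤ h⁻¹ * (1 + (1 - r)⁻¹) + 2 * h⁻¹ := by
        gcongr
        exact hsum _
    _ = (3 + (1 - r)⁻¹) * h⁻¹ := by ring

end StepSize

theorem branching_work_bound_general (η : ℝ) (hη : 0 < η) :
    ∃ C > (0 : ℝ), ∀ τ₀ ≤ (1 : ℝ), ∀ h ∈ Set.Ioc (0 : ℝ) τ₀,
      (η ≠ 1 → brWork τ₀ η h ≤ C * h ^ (-(max 1 η⁻¹))) ∧
      (η = 1 → brWork τ₀ η h ≤ C * (1 + logb 2 h⁻¹) * h⁻¹) := by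
  rcases lt_trichotomy η 1 with hlt | rfl | hgt
  · have hr : 0 < (2 : ℝ) ^ (1 - η) - 1 := sub_pos.2 (one_lt_rpow one_lt_two (sub_pos.2 hlt))
    refine ⟨3 + (2 ^ (1 - η) - 1)⁻¹, by positivity, fun τ₀ hτ₀ h hh ↦
      ⟨fun _ ↦ ?_, fun heq ↦ absurd heq hlt.ne⟩⟩
    rw [max_eq_right ((one_le_inv₀ hη).2 hlt.le)]
    exact brWork_le_of_lt_one hτ₀ hη hlt hh.1 hh.2
  · exact ⟨3, by norm_num, fun τ₀ hτ₀ h hh ↦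
      ⟨fun hne ↦ absurd rfl hne, fun _ ↦ brWork_one_le hτ₀ hh.1 hh.2⟩⟩
  · have hr : 0 < 1 - (2 : ℝ) ^ (1 - η) :=
      sub_pos.2 (rpow_lt_one_of_one_lt_of_neg one_lt_two (sub_neg.2 hgt))
    refine ⟨3 + (1 - 2 ^ (1 - η))⁻¹, by positivity, fun τ₀ hτ₀ h hh ↦
      ⟨fun _ ↦ ?_, fun heq ↦ absurd heq hgt.ne'⟩⟩
    rw [max_eq_left (inv_le_one_of_one_le₀ hgt.le), rpow_neg_one]
    exact brWork_le_of_one_lt hτ₀ hgt hh.1 hh.2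

/-- work bound of Theorem 2.3. -/
theorem branching_work_bound (τ₀ η : ℝ) (hτ₀ : τ₀ ∈ Set.Ioo (0 : ℝ) 1) (hη : 0 < η) :
    ∃ C > (0 : ℝ), ∀ h : ℝ, h ∈ Set.Ioc (0 : ℝ) τ₀ →
      (η ≠ 1 → brWork τ₀ η h ≤ C * h ^ (-(max 1 η⁻¹))) ∧
      (η = 1 → brWork τ₀ η h ≤ C * (1 + Real.logb 2 h⁻¹) * h⁻¹) := by
  obtain ⟨C, hC, hW⟩ := branching_work_bound_general η hη
  exact ⟨C, hC, hW τ₀ hτ₀.2.le⟩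
end

section
/- Let I be a finite linearly ordered set of cardinality Q ≥ 4, let f : I × I → [0,∞) be symmetric (f(i,j) = f(j,i)), and suppose there is A ≥ 0 such that Σ_{j ∈ I, j ≠ i} f(i,j) ≤ A for every i ∈ I. Then Σ_{i < j < k < m} f(i,j)·f(j,k)·f(k,m) ≤ Q·A³. -/
open Finset

/-!
Summing out the last index of a chain `i₀, …, iₙ` costs at most a factor `A`, since the only
weight depending on it is `w iₙ₋₁ iₙ`. Doing so `n` times leaves at most `A ^ n` for each `i₀`.
-/

section ChainSum

variable {ι R : Type*} [Semiring R]

/-- The total weight of the chains `i = i₀, i₁, …, iₙ` with `iₗ₊₁ ∈ s iₗ`, where a chain has weight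
`w i₀ i₁ * ⋯ * w iₙ₋₁ iₙ`. The products are nested as `w i₀ i₁ * (w i₁ i₂ * ⋯)`, so that
the sum over all later indices factors out. -/
def chainSum (s : ι → Finset ι) (w : ι → ι → R) : ℕ → ι → R
  | 0, _ => 1
  | n + 1, i => ∑ j ∈ s i, w i j * chainSum s w n j

theorem chainSum_three (s : ι → Finset ι) (w : ι → ι → R) (i : ι) :
    chainSum s w 3 i = ∑ j ∈ s i, ∑ k ∈ s j, ∑ m ∈ s k, w i j * w j k * w k m := by
  simp only [chainSum, mul_one, mul_sum, mul_assoc]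

variable [PartialOrder R] [IsOrderedRing R] {s : ι → Finset ι} {w : ι → ι → R} {A : R}

theorem chainSum_le_pow (hw : ∀ i, ∀ j ∈ s i, 0 ≤ w i j) (hrow : ∀ i, ∑ j ∈ s i, w i j ≤ A)
    (n : ℕ) (i : ι) : chainSum s w n i ≤ A ^ n := by
  have hA : 0 ≤ A := (sum_nonneg (hw i)).trans (hrow i)
  induction n generalizing i with
  | zero => rw [chainSum, pow_zero]
  | succ n ih =>
    calc ∑ j ∈ s i, w i j * chainSum s w n j
        ≤ ∑ j ∈ s i, w i j * A ^ n :=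
          sum_le_sum fun j hj => mul_le_mul_of_nonneg_left (ih j) (hw i j hj)
      _ = (∑ j ∈ s i, w i j) * A ^ n := (sum_mul ..).symm
      _ ≤ A * A ^ n := mul_le_mul_of_nonneg_right (hrow i) (pow_nonneg hA n)
      _ = A ^ (n + 1) := (pow_succ' A n).symm

theorem sum_chainSum_le_card_mul_pow (t : Finset ι) (hw : ∀ i, ∀ j ∈ s i, 0 ≤ w i j)
    (hrow : ∀ i, ∑ j ∈ s i, w i j ≤ A) (n : ℕ) :
    ∑ i ∈ t, chainSum s w n i ≤ #t * A ^ n := by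
  simpa only [nsmul_eq_mul] using
    sum_le_card_nsmul t _ _ fun i _ => chainSum_le_pow hw hrow n i

theorem quadruple_sum_bound_general (t : Finset ι) (hw : ∀ i, ∀ j ∈ s i, 0 ≤ w i j)
    (hrow : ∀ i, ∑ j ∈ s i, w i j ≤ A) :
    ∑ i ∈ t, ∑ j ∈ s i, ∑ k ∈ s j, ∑ m ∈ s k, w i j * w j k * w k m ≤ #t * A ^ 3 := by
  simpa only [chainSum_three] using sum_chainSum_le_card_mul_pow t hw hrow 3

end ChainSum

theorem sum_filter_lt_le_sum_filter_ne {ι M : Type*} [Fintype ι] [Preorder ι] [DecidableLT ι]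
    [DecidableEq ι] [AddCommMonoid M] [PartialOrder M] [IsOrderedAddMonoid M] {g : ι → M}
    {i : ι} (hg : ∀ j ≠ i, 0 ≤ g j) : ∑ j with i < j, g j ≤ ∑ j with j ≠ i, g j :=
  sum_le_sum_of_subset_of_nonneg (monotone_filter_right univ fun _ _ => ne_of_gt)
    fun j hj _ => hg j (mem_filter.mp hj).2

/-- the combinatorial estimate underlying the fourth-moment (kurtosis) bound of the
Appendix: the sum over increasing quadruples of products of pairwise weights is at most `Q·A³`. -/
theorem quadruple_sum_bound
    (I : Type*) [Fintype I] [LinearOrder I] (hQ : 4 ≤ Fintype.card I)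
    (f : I → I → ℝ) (hf0 : ∀ i j, 0 ≤ f i j) (hsymm : ∀ i j, f i j = f j i)
    (A : ℝ) (hA : 0 ≤ A) (hrow : ∀ i, ∑ j ∈ Finset.univ.filter (fun j => j ≠ i), f i j ≤ A) :
    (∑ i : I, ∑ j ∈ Finset.univ.filter (fun j => i < j),
      ∑ k ∈ Finset.univ.filter (fun k => j < k),
      ∑ m ∈ Finset.univ.filter (fun m => k < m),
        f i j * f j k * f k m)
      ≤ (Fintype.card I : ℝ) * A ^ 3 :=
  quadruple_sum_bound_general univ (fun i j _ => hf0 i j)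
    fun i => (sum_filter_lt_le_sum_filter_ne fun j _ => hf0 i j).trans (hrow i)
end
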